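/- Corollary purity form of DSSA: for any bipartite density operator ρ_AB, √((d_A−1)(d_B−1) − d_A d_B S_L(ρ_AB) + d_A S_L(ρ_A) + d_B S_L(ρ_B)) ≥ √(d_B−1)·√(d_A−1 − d_A S_L(ρ_A)) + √(d_A−1)·√(d_B−1 − d_B S_L(ρ_B)) − √(d_A−1)·√(d_B−1). -/

import Mathlib

open Matrix
open scoped ComplexOrder

noncomputable def linEntropy {n : Type*} [Fintype n] (ρ : Matrix n n ℂ) : ℝ :=
  1 - ((ρ * ρ).trace).re

noncomputable def ptraceB {dA dB : ℕ} (ρ : Matrix (Fin dA × Fin dB) (Fin dA × Fin dB) ℂ) :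
    Matrix (Fin dA) (Fin dA) ℂ := fun i j => ∑ k, ρ (i, k) (j, k)

noncomputable def ptraceA {dA dB : ℕ} (ρ : Matrix (Fin dA × Fin dB) (Fin dA × Fin dB) ℂ) :
    Matrix (Fin dB) (Fin dB) ℂ := fun i j => ∑ k, ρ (k, i) (k, j)

/-! Let `m`, `n` be the dimensions of the two factors and `A`, `B` the marginals of `ρ`. Normalizing
the traceless parts of `A` and `B` gives traceless Hermitian `X`, `Y` with `Tr X² ≤ m`,
`Tr Y² ≤ n`, `Tr (A X) = √(m Tr A² - 1)` and `Tr (B Y) = √(n Tr B² - 1)`. A traceless Hermitian `X`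
with `Tr X² ≤ m` has no eigenvalue above `√(m - 1)`, so testing `ρ` against
`(√(m - 1) - X) ⊗ (√(n - 1) - Y)` gives
`√(n - 1) Tr (A X) + √(m - 1) Tr (B Y) - √(m - 1) √(n - 1) ≤ Tr (ρ (X ⊗ Y))`.
Only the correlation part of `ρ` contributes to the right-hand side, which Cauchy–Schwarz for the
Hilbert–Schmidt product bounds by the square root of `m n Tr ρ² - m Tr A² - n Tr B² + 1`.
-/

open scoped Kronecker MatrixOrder

lemma re_natCast_mul {𝕜 : Type*} [RCLike 𝕜] (k : ℕ) (z : 𝕜) :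
    RCLike.re (k * z) = k * RCLike.re z := by
  rw [← RCLike.ofReal_natCast, RCLike.re_ofReal_mul]

lemma nonempty_of_trace_ne_zero {n R : Type*} [Fintype n] [AddCommMonoid R] {A : Matrix n n R}
    (hA : A.trace ≠ 0) : Nonempty n := by
  contrapose! hA
  exact trace_eq_zero_of_isEmpty A

section HilbertSchmidt

variable {n 𝕜 : Type*} [Fintype n] [RCLike 𝕜]

lemma re_trace_conjTranspose_mul_le (A B : Matrix n n 𝕜) :
    RCLike.re (Aᴴ * B).trace ≤ √(RCLike.re (Aᴴ * A).trace) * √(RCLike.re (Bᴴ * B).trace) := by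
  classical
  let := toMatrixSeminormedAddCommGroup (1 : Matrix n n 𝕜) .one
  let := toMatrixInnerProductSpace (1 : Matrix n n 𝕜) .one
  have hinner (X Y : Matrix n n 𝕜) : inner 𝕜 X Y = (Xᴴ * Y).trace := by
    change (Y * 1 * Xᴴ).trace = _
    rw [mul_one, trace_mul_comm]
  simpa only [norm_eq_sqrt_re_inner (𝕜 := 𝕜), hinner] using re_inner_le_norm (𝕜 := 𝕜) A B

lemma trace_mul_nonneg_of_posSemidef {A B : Matrix n n 𝕜} (hA : A.PosSemidef)
    (hB : B.PosSemidef) : 0 ≤ (A * B).trace := by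
  classical
  obtain ⟨C, rfl⟩ := CStarAlgebra.nonneg_iff_eq_star_mul_self.1 hB.nonneg
  rw [star_eq_conjTranspose, ← Matrix.mul_assoc, trace_mul_comm, ← Matrix.mul_assoc]
  exact (hA.mul_mul_conjTranspose_same C).trace_nonneg

/-- The purity `Tr ρ²` of a state; for any Hermitian matrix it is the squared Hilbert–Schmidt
norm. -/
noncomputable def purity (ρ : Matrix n n 𝕜) : ℝ := RCLike.re (ρ * ρ).trace

lemma trace_mul_self_eq_sum_sq_eigenvalues [DecidableEq n] {A : Matrix n n 𝕜}
    (hA : A.IsHermitian) : (A * A).trace = ((∑ i, hA.eigenvalues i ^ 2 : ℝ) : 𝕜) := by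
  conv_lhs => rw [hA.spectral_theorem, ← map_mul, Unitary.conjStarAlgAut_apply, trace_mul_cycle,
    Unitary.coe_star_mul_self, one_mul, diagonal_mul_diagonal, trace_diagonal]
  simp [sq]

lemma purity_eq_sum_sq_eigenvalues [DecidableEq n] {A : Matrix n n 𝕜} (hA : A.IsHermitian) :
    purity A = ∑ i, hA.eigenvalues i ^ 2 := by
  rw [purity, trace_mul_self_eq_sum_sq_eigenvalues hA, RCLike.ofReal_re]

lemma trace_mul_self_eq_purity {A : Matrix n n 𝕜} (hA : A.IsHermitian) :
    (A * A).trace = (purity A : 𝕜) := by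
  classical
  rw [purity_eq_sum_sq_eigenvalues hA, trace_mul_self_eq_sum_sq_eigenvalues hA]

lemma purity_nonneg {A : Matrix n n 𝕜} (hA : A.IsHermitian) : 0 ≤ purity A := by
  classical
  rw [purity_eq_sum_sq_eigenvalues hA]
  positivity

lemma purity_smul (c : ℝ) (A : Matrix n n 𝕜) : purity (c • A) = c ^ 2 * purity A := by
  simp only [purity, smul_mul_smul_comm, trace_smul, RCLike.smul_re, sq]

lemma purity_kronecker {m : Type*} [Fintype m] {A : Matrix m m 𝕜} {B : Matrix n n 𝕜}
    (hA : A.IsHermitian) (hB : B.IsHermitian) : purity (A ⊗ₖ B) = purity A * purity B := by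
  rw [purity, ← mul_kronecker_mul, trace_kronecker, trace_mul_self_eq_purity hA,
    trace_mul_self_eq_purity hB, ← RCLike.ofReal_mul, RCLike.ofReal_re]

lemma re_trace_mul_le_sqrt_purity {A B : Matrix n n 𝕜} (hA : A.IsHermitian)
    (hB : B.IsHermitian) : RCLike.re (A * B).trace ≤ √(purity A) * √(purity B) := by
  simpa only [purity, hA.eq, hB.eq] using re_trace_conjTranspose_mul_le A B

end HilbertSchmidt

section TracelessBound

lemma card_mul_sq_le_of_sum_eq_zero {ι : Type*} [Fintype ι] {f : ι → ℝ} (hf : ∑ i, f i = 0)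
    (i : ι) : Fintype.card ι * f i ^ 2 ≤ (Fintype.card ι - 1) * ∑ j, f j ^ 2 := by
  classical
  have hcs := sq_sum_le_card_mul_sum_sq (s := Finset.univ.erase i) (f := f)
  rw [Finset.sum_erase_eq_sub (Finset.mem_univ i), Finset.sum_erase_eq_sub (Finset.mem_univ i), hf,
    Finset.cast_card_erase_of_mem (Finset.mem_univ i), Finset.card_univ] at hcs
  linarith

variable {n 𝕜 : Type*} [Fintype n] [DecidableEq n] [RCLike 𝕜]

lemma posSemidef_sqrt_card_sub_one_smul_one_sub {X : Matrix n n 𝕜} (hX : X.IsHermitian)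
    (htr : X.trace = 0) (hle : purity X ≤ Fintype.card n) :
    (√(Fintype.card n - 1) • (1 : Matrix n n 𝕜) - X).PosSemidef := by
  have hsum : ∑ i, hX.eigenvalues i = 0 := by
    rw [hX.trace_eq_sum_eigenvalues] at htr
    exact_mod_cast htr
  rw [← Matrix.le_iff, ← Algebra.algebraMap_eq_smul_one]
  refine le_algebraMap_of_spectrum_le (fun x hx ↦ ?_) hX
  obtain ⟨i, rfl⟩ := hX.spectrum_real_eq_range_eigenvalues ▸ hx
  have hcard : (1 : ℝ) ≤ Fintype.card n := Nat.one_le_cast.2 (Fintype.card_pos_iff.2 ⟨i⟩)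
  have hsq := card_mul_sq_le_of_sum_eq_zero hsum i
  rw [← purity_eq_sum_sq_eigenvalues hX] at hsq
  refine Real.le_sqrt_of_sq_le (le_of_mul_le_mul_left (hsq.trans ?_) (zero_lt_one.trans_le hcard))
  rw [mul_comm]
  exact mul_le_mul_of_nonneg_right hle (sub_nonneg.2 hcard)

end TracelessBound

section TracelessPart

variable {n : Type*} [Fintype n] [DecidableEq n]

/-- The traceless part of `A`, scaled by the dimension so that no division occurs; for a state it is
the part carried by the Bloch vector. -/
def tracelessPart {R : Type*} [CommRing R] (A : Matrix n n R) : Matrix n n R :=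
  (Fintype.card n : R) • A - A.trace • 1

section CommRing

variable {R : Type*} [CommRing R]

lemma trace_tracelessPart (A : Matrix n n R) : (tracelessPart A).trace = 0 := by
  simp only [tracelessPart, trace_sub, trace_smul, trace_one, smul_eq_mul]
  ring

lemma trace_tracelessPart_mul (A : Matrix n n R) {M : Matrix n n R} (hM : M.trace = 0) :
    (tracelessPart A * M).trace = Fintype.card n * (A * M).trace := by
  simp only [tracelessPart, sub_mul, smul_mul_assoc, one_mul, trace_sub, trace_smul, hM, mul_zero,
    sub_zero, smul_eq_mul]

lemma trace_mul_tracelessPart (A : Matrix n n R) :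
    (A * tracelessPart A).trace = Fintype.card n * (A * A).trace - A.trace ^ 2 := by
  simp only [tracelessPart, mul_sub, mul_smul_comm, mul_one, trace_sub, trace_smul, smul_eq_mul, sq]

end CommRing

variable {𝕜 : Type*} [RCLike 𝕜]

lemma isHermitian_tracelessPart {A : Matrix n n 𝕜} (hA : A.IsHermitian) :
    (tracelessPart A).IsHermitian := by
  simp only [IsHermitian, tracelessPart, conjTranspose_sub, conjTranspose_smul, conjTranspose_one,
    ← trace_conjTranspose, hA.eq, star_natCast]

lemma re_trace_mul_tracelessPart {A : Matrix n n 𝕜} (htr : A.trace = 1) :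
    RCLike.re (A * tracelessPart A).trace = Fintype.card n * purity A - 1 := by
  rw [trace_mul_tracelessPart, htr, one_pow, map_sub, re_natCast_mul, RCLike.one_re, purity]

lemma purity_tracelessPart {A : Matrix n n 𝕜} (htr : A.trace = 1) :
    purity (tracelessPart A) = Fintype.card n * (Fintype.card n * purity A - 1) := by
  rw [purity, trace_tracelessPart_mul A (trace_tracelessPart A), re_natCast_mul,
    re_trace_mul_tracelessPart htr]

omit [DecidableEq n] in
lemma exists_traceless_re_trace_mul_eq_sqrt {A : Matrix n n 𝕜} (hA : A.IsHermitian)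
    (htr : A.trace = 1) :
    ∃ X : Matrix n n 𝕜, X.IsHermitian ∧ X.trace = 0 ∧ purity X ≤ Fintype.card n ∧
      RCLike.re (A * X).trace = √(Fintype.card n * purity A - 1) := by
  classical
  set s := Fintype.card n * purity A - 1 with hs
  have : Nonempty n := nonempty_of_trace_ne_zero (htr ▸ one_ne_zero)
  have hs0 : 0 ≤ s := by
    have h := purity_nonneg (isHermitian_tracelessPart hA)
    rw [purity_tracelessPart htr] at h
    exact nonneg_of_mul_nonneg_right h (Nat.cast_pos.2 Fintype.card_pos)
  -- If `s = 0` then `tracelessPart A = 0`, and the junk value `(√0)⁻¹ = 0` gives `X = 0`.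
  refine ⟨(√s)⁻¹ • tracelessPart A, ?_, ?_, ?_, ?_⟩
  · simp only [IsHermitian, conjTranspose_smul, star_trivial, (isHermitian_tracelessPart hA).eq]
  · rw [trace_smul, trace_tracelessPart, smul_zero]
  · rw [purity_smul, purity_tracelessPart htr, inv_pow, Real.sq_sqrt hs0, mul_left_comm]
    exact mul_le_of_le_one_right (Nat.cast_nonneg _) inv_mul_le_one
  · rw [mul_smul_comm, trace_smul, RCLike.smul_re, re_trace_mul_tracelessPart htr, ← hs,
      inv_mul_eq_div, Real.div_sqrt]

end TracelessPart

section PartialTrace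

variable {m n R : Type*}

/-- The partial trace over the second tensor factor. -/
def partialTraceRight [Fintype n] [AddCommMonoid R] (ρ : Matrix (m × n) (m × n) R) :
    Matrix m m R := fun i j ↦ ∑ k, ρ (i, k) (j, k)

/-- The partial trace over the first tensor factor. -/
def partialTraceLeft [Fintype m] [AddCommMonoid R] (ρ : Matrix (m × n) (m × n) R) :
    Matrix n n R := fun i j ↦ ∑ k, ρ (k, i) (k, j)

lemma isHermitian_partialTraceRight [Fintype n] [AddCommMonoid R] [StarAddMonoid R]
    {ρ : Matrix (m × n) (m × n) R} (hρ : ρ.IsHermitian) : (partialTraceRight ρ).IsHermitian := by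
  ext i j
  simp only [conjTranspose_apply, partialTraceRight, star_sum, hρ.apply]

lemma isHermitian_partialTraceLeft [Fintype m] [AddCommMonoid R] [StarAddMonoid R]
    {ρ : Matrix (m × n) (m × n) R} (hρ : ρ.IsHermitian) : (partialTraceLeft ρ).IsHermitian := by
  ext i j
  simp only [conjTranspose_apply, partialTraceLeft, star_sum, hρ.apply]

variable [Fintype m] [Fintype n]

lemma trace_partialTraceRight [AddCommMonoid R] (ρ : Matrix (m × n) (m × n) R) :
    (partialTraceRight ρ).trace = ρ.trace := by
  simp only [trace, diag_apply, partialTraceRight, Fintype.sum_prod_type]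

lemma trace_partialTraceLeft [AddCommMonoid R] (ρ : Matrix (m × n) (m × n) R) :
    (partialTraceLeft ρ).trace = ρ.trace := by
  simp only [trace, diag_apply, partialTraceLeft, Fintype.sum_prod_type_right]

lemma trace_mul_kronecker_one [NonAssocSemiring R] [DecidableEq n]
    (ρ : Matrix (m × n) (m × n) R) (P : Matrix m m R) :
    (ρ * (P ⊗ₖ (1 : Matrix n n R))).trace = (partialTraceRight ρ * P).trace := by
  simp only [trace, diag_apply, mul_apply, Fintype.sum_prod_type, kronecker_apply,
    partialTraceRight, one_apply, mul_ite, mul_one, mul_zero, Finset.sum_ite_eq', Finset.mem_univ,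
    if_true, Finset.sum_mul]
  exact Finset.sum_congr rfl fun i _ ↦ Finset.sum_comm

lemma trace_mul_one_kronecker [NonAssocSemiring R] [DecidableEq m]
    (ρ : Matrix (m × n) (m × n) R) (Q : Matrix n n R) :
    (ρ * ((1 : Matrix m m R) ⊗ₖ Q)).trace = (partialTraceLeft ρ * Q).trace := by
  simp only [trace, diag_apply, mul_apply, Fintype.sum_prod_type_right, kronecker_apply,
    partialTraceLeft, one_apply, ite_mul, one_mul, zero_mul, mul_ite, mul_zero, Finset.sum_ite_eq',
    Finset.mem_univ, if_true, Finset.sum_mul]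
  exact Finset.sum_congr rfl fun i _ ↦ Finset.sum_comm

end PartialTrace

section Correlation

variable {m n : Type*} [Fintype m] [Fintype n] [DecidableEq m] [DecidableEq n]

/-- The component of `ρ` in the tensor product of the two spaces of traceless matrices, scaled by
the total dimension so that no division occurs; for a state it is the part carried by the
correlation tensor. -/
def correlationPart {R : Type*} [CommRing R] (ρ : Matrix (m × n) (m × n) R) :
    Matrix (m × n) (m × n) R :=
  (Fintype.card m * Fintype.card n : R) • ρ - (Fintype.card m : R) • (partialTraceRight ρ ⊗ₖ 1)
    - (Fintype.card n : R) • (1 ⊗ₖ partialTraceLeft ρ) + ρ.trace • 1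

section CommRing

variable {R : Type*} [CommRing R] (ρ : Matrix (m × n) (m × n) R)

lemma trace_correlationPart_mul_kronecker_one (P : Matrix m m R) :
    (correlationPart ρ * (P ⊗ₖ 1)).trace = 0 := by
  simp only [correlationPart, add_mul, sub_mul, smul_mul_assoc, one_mul, mul_one,
    ← mul_kronecker_mul, trace_add, trace_sub, trace_smul, trace_mul_kronecker_one,
    trace_kronecker, trace_one, trace_partialTraceLeft, smul_eq_mul]
  ring

lemma trace_correlationPart_mul_one_kronecker (Q : Matrix n n R) :
    (correlationPart ρ * (1 ⊗ₖ Q)).trace = 0 := by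
  simp only [correlationPart, add_mul, sub_mul, smul_mul_assoc, one_mul, mul_one,
    ← mul_kronecker_mul, trace_add, trace_sub, trace_smul, trace_mul_one_kronecker,
    trace_kronecker, trace_one, trace_partialTraceRight, smul_eq_mul]
  ring

lemma trace_correlationPart_mul_kronecker {X : Matrix m m R} {Y : Matrix n n R}
    (hX : X.trace = 0) (hY : Y.trace = 0) :
    (correlationPart ρ * (X ⊗ₖ Y)).trace =
      Fintype.card m * Fintype.card n * (ρ * (X ⊗ₖ Y)).trace := by
  simp only [correlationPart, add_mul, sub_mul, smul_mul_assoc, one_mul, ← mul_kronecker_mul,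
    trace_add, trace_sub, trace_smul, trace_kronecker, hX, hY, smul_eq_mul, mul_zero, zero_mul,
    sub_zero, add_zero]

lemma trace_correlationPart_mul_self :
    (correlationPart ρ * correlationPart ρ).trace =
      Fintype.card m * Fintype.card n *
        (Fintype.card m * Fintype.card n * (ρ * ρ).trace
          - Fintype.card m * (partialTraceRight ρ * partialTraceRight ρ).trace
          - Fintype.card n * (partialTraceLeft ρ * partialTraceLeft ρ).trace + ρ.trace ^ 2) := by
  have horth : (correlationPart ρ * correlationPart ρ).trace =
      Fintype.card m * Fintype.card n * (ρ * correlationPart ρ).trace := by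
    have htr := trace_correlationPart_mul_kronecker_one ρ 1
    rw [one_kronecker_one, mul_one] at htr
    conv_lhs => enter [1, 2]; rw [correlationPart]
    simp only [mul_add, mul_sub, mul_smul_comm, mul_one, trace_add, trace_sub, trace_smul,
      trace_correlationPart_mul_kronecker_one, trace_correlationPart_mul_one_kronecker, htr,
      trace_mul_comm _ ρ, smul_eq_mul, mul_zero, sub_zero, add_zero]
  rw [horth, correlationPart]
  simp only [mul_add, mul_sub, mul_smul_comm, mul_one, trace_add, trace_sub, trace_smul,
    trace_mul_kronecker_one, trace_mul_one_kronecker, smul_eq_mul, sq]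

lemma trace_mul_smul_one_sub_kronecker {S : Type*} [CommRing S] [Algebra S R] (a b : S)
    (X : Matrix m m R) (Y : Matrix n n R) :
    (ρ * ((a • 1 - X) ⊗ₖ (b • 1 - Y))).trace =
      (a * b) • ρ.trace - a • (partialTraceLeft ρ * Y).trace
        - b • (partialTraceRight ρ * X).trace + (ρ * (X ⊗ₖ Y)).trace := by
  have hexpand : (a • 1 - X) ⊗ₖ (b • 1 - Y) =
      (a * b) • (1 : Matrix (m × n) (m × n) R) - a • (1 ⊗ₖ Y) - b • (X ⊗ₖ 1) + X ⊗ₖ Y := by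
    simp only [sub_eq_add_neg, ← neg_one_smul S X, ← neg_one_smul S Y, add_kronecker,
      kronecker_add, smul_kronecker, kronecker_smul, one_kronecker_one]
    module
  simp only [hexpand, mul_add, mul_sub, mul_smul_comm, mul_one, trace_add, trace_sub, trace_smul,
    trace_mul_kronecker_one, trace_mul_one_kronecker]

end CommRing

variable {𝕜 : Type*} [RCLike 𝕜] {ρ : Matrix (m × n) (m × n) 𝕜}

lemma isHermitian_correlationPart (hρ : ρ.IsHermitian) : (correlationPart ρ).IsHermitian := by
  simp only [IsHermitian, correlationPart, conjTranspose_add, conjTranspose_sub,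
    conjTranspose_smul, conjTranspose_kronecker, conjTranspose_one, ← trace_conjTranspose, hρ.eq,
    (isHermitian_partialTraceRight hρ).eq, (isHermitian_partialTraceLeft hρ).eq, star_natCast,
    star_mul']

lemma purity_correlationPart (htr : ρ.trace = 1) :
    purity (correlationPart ρ) =
      Fintype.card m * Fintype.card n *
        (Fintype.card m * Fintype.card n * purity ρ - Fintype.card m * purity (partialTraceRight ρ)
          - Fintype.card n * purity (partialTraceLeft ρ) + 1) := by
  rw [purity, trace_correlationPart_mul_self, htr, one_pow]
  simp only [mul_assoc, re_natCast_mul, map_add, map_sub, RCLike.one_re, purity]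

end Correlation

section BlockPositive

variable {m n 𝕜 : Type*} [Fintype m] [Fintype n] [RCLike 𝕜]

lemma re_trace_mul_kronecker_le {ρ : Matrix (m × n) (m × n) 𝕜} (hρ : ρ.IsHermitian)
    (htr : ρ.trace = 1) {X : Matrix m m 𝕜} {Y : Matrix n n 𝕜} (hX : X.IsHermitian)
    (hY : Y.IsHermitian) (hXtr : X.trace = 0) (hYtr : Y.trace = 0)
    (hXle : purity X ≤ Fintype.card m) (hYle : purity Y ≤ Fintype.card n) :
    RCLike.re (ρ * (X ⊗ₖ Y)).trace ≤
      √(Fintype.card m * Fintype.card n * purity ρ - Fintype.card m * purity (partialTraceRight ρ)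
          - Fintype.card n * purity (partialTraceLeft ρ) + 1) := by
  classical
  set q := Fintype.card m * Fintype.card n * purity ρ
    - Fintype.card m * purity (partialTraceRight ρ)
    - Fintype.card n * purity (partialTraceLeft ρ) + 1
  set d : ℝ := Fintype.card m * Fintype.card n with hd
  have hd0 : 0 < d := by
    have : Nonempty (m × n) := nonempty_of_trace_ne_zero (htr ▸ one_ne_zero)
    rw [hd, ← Nat.cast_mul, ← Fintype.card_prod]
    exact Nat.cast_pos.2 Fintype.card_pos
  have hXY : (X ⊗ₖ Y).IsHermitian := by
    rw [IsHermitian, conjTranspose_kronecker, hX.eq, hY.eq]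
  refine le_of_mul_le_mul_left ?_ hd0
  calc d * RCLike.re (ρ * (X ⊗ₖ Y)).trace
      = RCLike.re (correlationPart ρ * (X ⊗ₖ Y)).trace := by
        simp only [trace_correlationPart_mul_kronecker ρ hXtr hYtr, hd, mul_assoc,
          re_natCast_mul]
    _ ≤ √(purity (correlationPart ρ)) * √(purity (X ⊗ₖ Y)) :=
        re_trace_mul_le_sqrt_purity (isHermitian_correlationPart hρ) hXY
    _ ≤ √(d * q) * √d := by
        rw [purity_correlationPart htr, purity_kronecker hX hY]
        exact mul_le_mul_of_nonneg_left (Real.sqrt_le_sqrt <|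
          mul_le_mul hXle hYle (purity_nonneg hY) (Nat.cast_nonneg _)) (Real.sqrt_nonneg _)
    _ = d * √q := by
        rw [Real.sqrt_mul hd0.le, mul_right_comm, Real.mul_self_sqrt hd0.le]

/-- Block-positive matrices (entanglement witnesses and states alike): Hermitian matrices with
nonnegative expectation on product vectors. The condition is imposed on tensor products of positive
semidefinite matrices, which are nonnegative combinations of product projections. -/
structure IsBlockPositive (ρ : Matrix (m × n) (m × n) 𝕜) : Prop where
  isHermitian : ρ.IsHermitian
  trace_mul_kronecker_nonneg : ∀ ⦃P : Matrix m m 𝕜⦄ ⦃Q : Matrix n n 𝕜⦄,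
    P.PosSemidef → Q.PosSemidef → 0 ≤ (ρ * (P ⊗ₖ Q)).trace

lemma isBlockPositive_of_posSemidef {ρ : Matrix (m × n) (m × n) 𝕜} (hρ : ρ.PosSemidef) :
    IsBlockPositive ρ where
  isHermitian := hρ.isHermitian
  trace_mul_kronecker_nonneg _ _ hP hQ := trace_mul_nonneg_of_posSemidef hρ (hP.kronecker hQ)

theorem dssa_sqrt_form_general {ρ : Matrix (m × n) (m × n) 𝕜} (hρ : IsBlockPositive ρ)
    (htr : ρ.trace = 1) :
    √(Fintype.card n - 1) * √(Fintype.card m * purity (partialTraceRight ρ) - 1)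
        + √(Fintype.card m - 1) * √(Fintype.card n * purity (partialTraceLeft ρ) - 1)
        - √(Fintype.card m - 1) * √(Fintype.card n - 1) ≤
      √(Fintype.card m * Fintype.card n * purity ρ - Fintype.card m * purity (partialTraceRight ρ)
          - Fintype.card n * purity (partialTraceLeft ρ) + 1) := by
  classical
  obtain ⟨X, hX, hXtr, hXle, hAX⟩ := exists_traceless_re_trace_mul_eq_sqrt
    (isHermitian_partialTraceRight hρ.isHermitian) ((trace_partialTraceRight ρ).trans htr)
  obtain ⟨Y, hY, hYtr, hYle, hBY⟩ := exists_traceless_re_trace_mul_eq_sqrt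
    (isHermitian_partialTraceLeft hρ.isHermitian) ((trace_partialTraceLeft ρ).trans htr)
  have hpos := (RCLike.nonneg_iff.1 <| hρ.trace_mul_kronecker_nonneg
    (posSemidef_sqrt_card_sub_one_smul_one_sub hX hXtr hXle)
    (posSemidef_sqrt_card_sub_one_smul_one_sub hY hYtr hYle)).1
  have hcorr := re_trace_mul_kronecker_le hρ.isHermitian htr hX hY hXtr hYtr hXle hYle
  rw [trace_mul_smul_one_sub_kronecker, htr] at hpos
  simp only [map_add, map_sub, RCLike.smul_re, RCLike.one_re, mul_one, hAX, hBY] at hpos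
  linarith

end BlockPositive

section LinEntropy

lemma linEntropy_eq_one_sub_purity {n : Type*} [Fintype n] (ρ : Matrix n n ℂ) :
    linEntropy ρ = 1 - purity ρ := rfl

variable {dA dB : ℕ} (ρ : Matrix (Fin dA × Fin dB) (Fin dA × Fin dB) ℂ)

lemma ptraceB_eq_partialTraceRight : ptraceB ρ = partialTraceRight ρ := rfl

lemma ptraceA_eq_partialTraceLeft : ptraceA ρ = partialTraceLeft ρ := rfl

end LinEntropy

/-- Purity (square-root) form of dimensionally sharp subadditivity:
`√((d_A-1)(d_B-1) - d_A d_B S_L(ρ_AB) + d_A S_L(ρ_A) + d_B S_L(ρ_B)) ≥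
 √(d_B-1)√(d_A-1-d_A S_L(ρ_A)) + √(d_A-1)√(d_B-1-d_B S_L(ρ_B)) - √(d_A-1)√(d_B-1)`. -/
theorem dssa_sqrt_form (dA dB : ℕ) (hA : 2 ≤ dA) (hB : 2 ≤ dB)
    (ρ : Matrix (Fin dA × Fin dB) (Fin dA × Fin dB) ℂ)
    (hρ : ρ.PosSemidef) (hρtr : ρ.trace = 1) :
    Real.sqrt (((dA : ℝ) - 1) * ((dB : ℝ) - 1) - (dA : ℝ) * dB * linEntropy ρ
        + (dA : ℝ) * linEntropy (ptraceB ρ) + (dB : ℝ) * linEntropy (ptraceA ρ)) ≥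
      Real.sqrt ((dB : ℝ) - 1) * Real.sqrt ((dA : ℝ) - 1 - dA * linEntropy (ptraceB ρ))
      + Real.sqrt ((dA : ℝ) - 1) * Real.sqrt ((dB : ℝ) - 1 - dB * linEntropy (ptraceA ρ))
      - Real.sqrt ((dA : ℝ) - 1) * Real.sqrt ((dB : ℝ) - 1) := by
  have hlin (k : ℕ) (p : ℝ) : (k : ℝ) - 1 - k * (1 - p) = k * p - 1 := by ring
  have hmain := dssa_sqrt_form_general (isBlockPositive_of_posSemidef hρ) hρtr
  simp only [Fintype.card_fin] at hmain
  simp only [linEntropy_eq_one_sub_purity, ptraceB_eq_partialTraceRight,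
    ptraceA_eq_partialTraceLeft, hlin, ge_iff_le]
  convert hmain using 2
  ring
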